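/- arXiv:1911.11475 — 2 statements merged into one kernel-verified Lean document; each statement's English description precedes it below -/
import Mathlib

section
/- Geometric eigenfunctions of the closed quantum Black–Scholes generator: for every λ ∈ ℝ, the function ψ_λ(x) = g(x)^{-1/2} e^{iλx/σ²} satisfies i[Ĥ_g, M_U]ψ_λ = λ ψ_λ; equivalently, the eigenfunctions are characterised by √(g(x)) · ψ_λ(x) = e^{iλx/σ²}. -/
/-!
Only the first-order part of the commutator survives:
`[Ĥ_g, M_U]ψ = -(σ²/2g)(U''ψ + 2U'ψ')`. As `g = U'`, the bracket is `g'ψ + 2gψ' = 2√g (√g ψ)'`, so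
`i[Ĥ_g, M_U]ψ = -(iσ²/√g)(√g ψ)'`: multiplication by `√g` conjugates the generator into the
momentum operator `-iσ² d/dx`, whose eigenfunctions are the plane waves.
-/

open scoped Topology

section Calculus

variable {𝕜 E F : Type*} [NontriviallyNormedField 𝕜] [NormedAddCommGroup E] [NormedSpace 𝕜 E]
  [NormedAddCommGroup F] [NormedSpace 𝕜 F]

theorem contDiffAt_of_smul_eventuallyEq {n : WithTop ℕ∞} {c : E → 𝕜} {f h : E → F} {x : E}
    (hc : ContDiffAt 𝕜 n c x) (hcx : c x ≠ 0) (hh : ContDiffAt 𝕜 n h x)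
    (hcf : ∀ᶠ y in 𝓝 x, c y • f y = h y) : ContDiffAt 𝕜 n f x := by
  refine ((hc.inv hcx).smul hh).congr_of_eventuallyEq ?_
  filter_upwards [hcf, hc.continuousAt.eventually_ne hcx] with y hy hcy
  exact (eq_inv_smul_iff₀ hcy).2 hy

theorem deriv_deriv_fun_smul {c : 𝕜 → 𝕜} {f : 𝕜 → F} {x : 𝕜} (hc : ContDiffAt 𝕜 2 c x)
    (hf : ContDiffAt 𝕜 2 f x) :
    deriv (deriv fun y => c y • f y) x =
      c x • deriv (deriv f) x + (2 : 𝕜) • deriv c x • deriv f x + deriv (deriv c) x • f x := by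
  have first_deriv : deriv (fun y => c y • f y) =ᶠ[𝓝 x]
      fun y => c y • deriv f y + deriv c y • f y := by
    filter_upwards [hc.eventually (by simp), hf.eventually (by simp)] with y hcy hfy
    exact deriv_fun_smul (hcy.differentiableAt two_ne_zero) (hfy.differentiableAt two_ne_zero)
  have hc₀ := (hc.differentiableAt two_ne_zero).hasDerivAt
  have hf₀ := (hf.differentiableAt two_ne_zero).hasDerivAt
  have hc₁ := ((hc.derivWithin one_add_one_eq_two.le).differentiableAt one_ne_zero).hasDerivAt
  have hf₁ := ((hf.derivWithin one_add_one_eq_two.le).differentiableAt one_ne_zero).hasDerivAt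
  rw [first_deriv.deriv_eq, ((hc₀.fun_smul hf₁).fun_add (hc₁.fun_smul hf₀)).deriv]
  module

theorem two_mul_sqrt_smul_deriv_sqrt_smul {V : Type*} [NormedAddCommGroup V] [NormedSpace ℝ V]
    {g : ℝ → ℝ} {f : ℝ → V} {x : ℝ} (hg : DifferentiableAt ℝ g x) (hgx : 0 < g x)
    (hf : DifferentiableAt ℝ f x) :
    (2 * √(g x)) • deriv (fun y => √(g y) • f y) x =
      deriv g x • f x + (2 * g x) • deriv f x := by
  rw [((hg.hasDerivAt.sqrt hgx.ne').fun_smul hf.hasDerivAt).deriv, smul_add, smul_smul, smul_smul,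
    mul_assoc, Real.mul_self_sqrt hgx.le, mul_div_cancel₀ _ (by positivity), add_comm]

end Calculus

/-- The Hamiltonian `Ĥ_g = -(σ²/2g) d²/dx²` of the closed quantum Black–Scholes model, extended
to all functions by the convention that `deriv` is `0` where the derivative does not exist. -/
noncomputable def cqbsHamiltonian (σ : ℝ) (g : ℝ → ℝ) (ψ : ℝ → ℂ) (x : ℝ) : ℂ :=
  -((σ ^ 2 / (2 * g x) : ℝ) : ℂ) * deriv (deriv ψ) x

/-- The closed quantum Black–Scholes generator `i[Ĥ_g, M_U]`, with `g = U'`, written pointwise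
because `cqbsHamiltonian` is not linear on nondifferentiable functions. -/
noncomputable def cqbsGenerator (σ : ℝ) (U : ℝ → ℝ) (ψ : ℝ → ℂ) (x : ℝ) : ℂ :=
  Complex.I * (cqbsHamiltonian σ (deriv U) (fun y => (U y : ℂ) * ψ y) x -
    (U x : ℂ) * cqbsHamiltonian σ (deriv U) ψ x)

section Generator

variable {σ : ℝ} {U : ℝ → ℝ} {ψ : ℝ → ℂ} {x : ℝ}

theorem cqbsHamiltonian_commutator_apply (g : ℝ → ℝ) (hU : ContDiffAt ℝ 2 U x)
    (hψ : ContDiffAt ℝ 2 ψ x) :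
    cqbsHamiltonian σ g (fun y => (U y : ℂ) * ψ y) x - (U x : ℂ) * cqbsHamiltonian σ g ψ x =
      -((σ ^ 2 / (2 * g x) : ℝ) : ℂ) *
        (deriv (deriv U) x * ψ x + 2 * deriv U x * deriv ψ x) := by
  have leibniz := deriv_deriv_fun_smul hU hψ
  simp only [Complex.real_smul, Complex.ofReal_ofNat] at leibniz
  rw [cqbsHamiltonian, cqbsHamiltonian, leibniz]
  ring

theorem cqbsGenerator_apply (hU : ContDiffAt ℝ 2 U x) (hUx : 0 < deriv U x)
    (hψ : ContDiffAt ℝ 2 ψ x) :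
    cqbsGenerator σ U ψ x =
      -(Complex.I * σ ^ 2 / √(deriv U x)) * deriv (fun y => (√(deriv U y) : ℂ) * ψ y) x := by
  have half_density := two_mul_sqrt_smul_deriv_sqrt_smul
    ((hU.derivWithin one_add_one_eq_two.le).differentiableAt one_ne_zero) hUx
    (hψ.differentiableAt two_ne_zero)
  simp only [Complex.real_smul, Complex.ofReal_mul, Complex.ofReal_ofNat] at half_density
  have sqrt_sq : ((deriv U x : ℝ) : ℂ) = (√(deriv U x) : ℂ) ^ 2 := by
    rw [← Complex.ofReal_pow, Real.sq_sqrt hUx.le]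
  have sqrt_ne_zero : (√(deriv U x) : ℂ) ≠ 0 :=
    Complex.ofReal_ne_zero.2 (Real.sqrt_pos.2 hUx).ne'
  rw [cqbsGenerator, cqbsHamiltonian_commutator_apply _ hU hψ, ← half_density]
  push_cast
  rw [sqrt_sq]
  field_simp

theorem cqbsGenerator_eq_mul_iff (hσ : σ ≠ 0) (hU : ContDiffAt ℝ 2 U x) (hUx : 0 < deriv U x)
    (hψ : ContDiffAt ℝ 2 ψ x) (lam : ℂ) :
    cqbsGenerator σ U ψ x = lam * ψ x ↔
      deriv (fun y => (√(deriv U y) : ℂ) * ψ y) x =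
        Complex.I * lam / σ ^ 2 * (√(deriv U x) * ψ x) := by
  have sqrt_ne_zero : (√(deriv U x) : ℂ) ≠ 0 :=
    Complex.ofReal_ne_zero.2 (Real.sqrt_pos.2 hUx).ne'
  have σ_ne_zero : (σ : ℂ) ≠ 0 := Complex.ofReal_ne_zero.2 hσ
  rw [cqbsGenerator_apply hU hUx hψ]
  field_simp
  constructor <;> intro h
  · linear_combination
      Complex.I * h + deriv (fun y => (√(deriv U y) : ℂ) * ψ y) x * σ ^ 2 * Complex.I_sq
  · linear_combination -Complex.I * h - √(deriv U x) * lam * ψ x * Complex.I_sq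

theorem geometric_eigenfunctions_cqbs_general (hσ : σ ≠ 0) (hU : ContDiffAt ℝ 3 U x) (lam : ℂ)
    (hψ : ∀ᶠ y : ℝ in 𝓝 x, (√(deriv U y) : ℂ) * ψ y =
      Complex.exp (Complex.I * lam * y / (σ ^ 2 : ℂ))) :
    cqbsGenerator σ U ψ x = lam * ψ x := by
  have hUx : 0 < deriv U x := by
    refine Real.sqrt_ne_zero'.1 fun h => Complex.exp_ne_zero _ (hψ.self_of_nhds.symm.trans ?_)
    rw [h, Complex.ofReal_zero, zero_mul]
  have wave_deriv : HasDerivAt (fun y : ℝ => Complex.exp (Complex.I * lam * y / (σ ^ 2 : ℂ)))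
      (Complex.exp (Complex.I * lam * x / (σ ^ 2 : ℂ)) * (Complex.I * lam * 1 / (σ ^ 2 : ℂ))) x :=
    (((hasDerivAt_id x).ofReal_comp.const_mul _).div_const _).cexp
  have wave_contDiffAt : ContDiffAt ℝ 2
      (fun y : ℝ => Complex.exp (Complex.I * lam * y / (σ ^ 2 : ℂ))) x :=
    ((contDiffAt_const.mul Complex.ofRealCLM.contDiff.contDiffAt).div_const _).cexp
  have hψ₂ : ContDiffAt ℝ 2 ψ x :=
    contDiffAt_of_smul_eventuallyEq ((hU.derivWithin two_add_one_eq_three.le).sqrt hUx.ne')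
      (Real.sqrt_pos.2 hUx).ne' wave_contDiffAt (by simpa only [Complex.real_smul] using hψ)
  rw [cqbsGenerator_eq_mul_iff hσ (hU.of_le (by norm_num)) hUx hψ₂,
    Filter.EventuallyEq.deriv_eq hψ, wave_deriv.deriv, hψ.self_of_nhds, mul_one, mul_comm]

end Generator

/-- Geometric eigenfunctions of the closed quantum Black–Scholes generator: for every
`λ ∈ ℝ`, the function `ψ_λ`, characterised by `√(g(x)) ψ_λ(x) = e^{iλx/σ²}` (i.e.
`ψ_λ(x) = g(x)^{-1/2} e^{iλx/σ²}`), satisfies `i[Ĥ_g, M_U]ψ_λ = λ ψ_λ`. -/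
theorem geometric_eigenfunctions_cqbs
    (σ : ℝ) (hσ : 0 < σ)
    (U : ℝ → ℝ) (hU : ContDiff ℝ (⊤ : ℕ∞) U)
    (g : ℝ → ℝ) (hg : g = deriv U) (hgpos : ∀ x : ℝ, 0 < g x)
    (Hg : (ℝ → ℂ) → ℝ → ℂ)
    (hHg : ∀ (f : ℝ → ℂ) (x : ℝ),
      Hg f x = -(Complex.ofReal (σ ^ 2 / (2 * g x))) * deriv (deriv f) x)
    (lam : ℝ) (ψ : ℝ → ℂ)
    (hψ : ∀ x : ℝ, Complex.ofReal (Real.sqrt (g x)) * ψ x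
      = Complex.exp (Complex.I * lam * x / (σ ^ 2 : ℂ)))
    (x : ℝ) :
    Complex.I * (Hg (fun y => (U y : ℂ) * ψ y) x - (U x : ℂ) * Hg ψ x)
      = (lam : ℂ) * ψ x := by
  obtain rfl : Hg = cqbsHamiltonian σ g := funext₂ hHg
  subst hg
  exact geometric_eigenfunctions_cqbs_general hσ.ne' (hU.contDiffAt.of_le (by norm_cast)) lam
    (.of_forall hψ)
end

section
/- Explicit double commutator under the metric g = U': let U : ℝ → ℝ be smooth with U'(x) > 0 for all x, set a₂ = −(σ²/2)·(U')^{-1} and Ĥψ = a₂ψ'', and set p = U''/U'. Then for every smooth ψ : ℝ → ℂ, [Ĥ,[Ĥ,M_U]]ψ = (σ⁴/2)(U')^{-1}·( p·ψ'' + p'·ψ' + (1/2)p''·ψ ); in particular the coefficient of ψ' is (σ⁴/2)(U')^{-1}((U')^{-1}U'')' and the zero-order coefficient is (σ⁴/4)(U')^{-1}((U')^{-1}U'')''. -/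
/-!
Write `D` for `d/dx`. Whatever the coefficient `a`, one has `[a D², M_U] = a U'' + 2 a U' D`. For
`a = c (U')⁻¹` the coefficient of `D` becomes the constant `2 c`, so that `[Ĥ, M_U] = c p + 2 c D`
with `p = U'' / U'`. In the second commutator `[Ĥ, M_p]` contributes `p''` and `p'`, while
`[Ĥ, 2 D] = -2 a' D²` contributes `p`, because `a' = -a p`.
-/

open scoped Topology

/-- The commutator `[A, B] = AB - BA`, for maps that need not be additive: `deriv` is additive only
on differentiable functions. -/
def opCommutator {F : Type*} [Sub F] (A B : F → F) (f : F) : F :=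
  A (B f) - B (A f)

section DifferentialOperators

variable {𝕜 E : Type*} [NontriviallyNormedField 𝕜] [NormedAddCommGroup E] [NormedSpace 𝕜 E]

/-- The operator `M_u` of pointwise multiplication by the scalar function `u`, on vector-valued
functions. -/
def mulOp (u : 𝕜 → 𝕜) (f : 𝕜 → E) : 𝕜 → E :=
  fun x ↦ u x • f x

/-- The first-order differential operator `b + e D`. -/
noncomputable def firstOrderOp (b e : 𝕜 → 𝕜) (f : 𝕜 → E) : 𝕜 → E :=
  fun x ↦ b x • f x + e x • deriv f x

/-- The second-order differential operator `a D²` without lower-order terms. -/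
noncomputable def secondOrderOp (a : 𝕜 → 𝕜) (f : 𝕜 → E) : 𝕜 → E :=
  fun x ↦ a x • deriv (deriv f) x

/-- The operator `Ĥ = c (U')⁻¹ D²` of the metric `g = U'`; the physical normalization is
`c = -σ² / 2`. -/
noncomputable def metricHamiltonian (c : 𝕜) (U : 𝕜 → 𝕜) : (𝕜 → E) → 𝕜 → E :=
  secondOrderOp fun x ↦ c * (deriv U x)⁻¹

variable {a b e u U : 𝕜 → 𝕜} {f g ψ : 𝕜 → E} {x : 𝕜}

theorem deriv_deriv_smul (hu : ContDiffAt 𝕜 2 u x) (hf : ContDiffAt 𝕜 2 f x) :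
    deriv (deriv fun y ↦ u y • f y) x =
      deriv (deriv u) x • f x + (2 : 𝕜) • deriv u x • deriv f x + u x • deriv (deriv f) x := by
  have leibniz := iteratedDerivWithin_smul (n := 2) (Set.mem_univ x) uniqueDiffOn_univ
    hu.contDiffWithinAt hf.contDiffWithinAt
  simp only [iteratedDerivWithin_univ, iteratedDeriv_succ, iteratedDeriv_zero,
    Finset.sum_range_succ, Finset.sum_range_zero, Nat.choose, zero_add, Nat.sub_zero,
    Nat.reduceAdd, Nat.reduceSub] at leibniz
  refine leibniz.trans ?_
  module

theorem secondOrderOp_congr (h : f =ᶠ[𝓝 x] g) : secondOrderOp a f x = secondOrderOp a g x :=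
  congrArg (a x • ·) h.deriv.deriv_eq

theorem contDiffAt_secondOrderOp {n : WithTop ℕ∞} (ha : ContDiffAt 𝕜 n a x)
    (hf : ContDiffAt 𝕜 (n + 1 + 1) f x) : ContDiffAt 𝕜 n (secondOrderOp a f) x :=
  ha.smul ((hf.derivWithin le_rfl).derivWithin le_rfl)

theorem opCommutator_secondOrderOp_mulOp (hu : ContDiffAt 𝕜 2 u x) (hf : ContDiffAt 𝕜 2 f x) :
    opCommutator (secondOrderOp a) (mulOp u) f x =
      firstOrderOp (fun y ↦ a y * deriv (deriv u) y) (fun y ↦ 2 * a y * deriv u y) f x := by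
  have deriv_deriv_mulOp : deriv (deriv (mulOp u f)) x =
      deriv (deriv u) x • f x + (2 : 𝕜) • deriv u x • deriv f x + u x • deriv (deriv f) x :=
    deriv_deriv_smul hu hf
  simp only [opCommutator, Pi.sub_apply, secondOrderOp, deriv_deriv_mulOp, mulOp, firstOrderOp]
  module

theorem opCommutator_secondOrderOp_firstOrderOp (ha : DifferentiableAt 𝕜 a x)
    (hb : ContDiffAt 𝕜 2 b x) (he : ContDiffAt 𝕜 2 e x) (hf : ContDiffAt 𝕜 3 f x) :
    opCommutator (secondOrderOp a) (firstOrderOp b e) f x =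
      (2 * a x * deriv e x - e x * deriv a x) • deriv (deriv f) x +
        (a x * (2 * deriv b x + deriv (deriv e) x)) • deriv f x +
        (a x * deriv (deriv b) x) • f x := by
  have hf₂ : ContDiffAt 𝕜 2 f x := hf.of_le (by norm_num)
  have hf' : ContDiffAt 𝕜 2 (deriv f) x := hf.derivWithin (by norm_num)
  have hf'' : DifferentiableAt 𝕜 (deriv (deriv f)) x :=
    (hf'.derivWithin (m := 1) (by norm_num)).differentiableAt one_ne_zero
  have deriv_deriv_firstOrderOp : deriv (deriv (firstOrderOp b e f)) x =
      deriv (deriv fun y ↦ b y • f y) x + deriv (deriv fun y ↦ e y • deriv f y) x := by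
    simpa only [iteratedDeriv_succ, iteratedDeriv_zero] using!
      iteratedDeriv_add (n := 2) (hb.smul hf₂) (he.smul hf')
  have deriv_secondOrderOp : deriv (secondOrderOp a f) x =
      a x • deriv (deriv (deriv f)) x + deriv a x • deriv (deriv f) x :=
    deriv_fun_smul ha hf''
  rw [opCommutator, Pi.sub_apply, secondOrderOp, deriv_deriv_firstOrderOp,
    deriv_deriv_smul hb hf₂, deriv_deriv_smul he hf', firstOrderOp, deriv_secondOrderOp,
    secondOrderOp]
  module

theorem opCommutator_metricHamiltonian_mulOp (c : 𝕜) (hU : ContDiffAt 𝕜 2 U x)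
    (hU' : deriv U x ≠ 0) (hf : ContDiffAt 𝕜 2 f x) :
    opCommutator (metricHamiltonian c U) (mulOp U) f x =
      firstOrderOp (fun y ↦ c * logDeriv (deriv U) y) (fun _ ↦ 2 * c) f x := by
  rw [metricHamiltonian, opCommutator_secondOrderOp_mulOp hU hf]
  simp only [firstOrderOp, logDeriv_apply]
  congr 2 <;> field_simp

theorem hasDerivAt_const_mul_inv_logDeriv (c : 𝕜) (hu : DifferentiableAt 𝕜 u x) (hx : u x ≠ 0) :
    HasDerivAt (fun y ↦ c * (u y)⁻¹) (-(c * (u x)⁻¹ * logDeriv u x)) x := by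
  refine ((hu.hasDerivAt.fun_inv hx).const_mul c).congr_deriv ?_
  rw [logDeriv_apply]
  field_simp

theorem double_commutator_explicit_metric_general (c : 𝕜) (hU : ContDiffAt 𝕜 4 U x)
    (hU' : deriv U x ≠ 0) (hψ : ContDiffAt 𝕜 4 ψ x) :
    opCommutator (metricHamiltonian c U) (opCommutator (metricHamiltonian c U) (mulOp U)) ψ x =
      (c ^ 2 * (deriv U x)⁻¹) •
        ((2 * logDeriv (deriv U) x) • deriv (deriv ψ) x +
          (2 * deriv (logDeriv (deriv U)) x) • deriv ψ x +
          deriv (deriv (logDeriv (deriv U))) x • ψ x) := by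
  have hU₂ : ContDiffAt 𝕜 2 U x := hU.of_le (by norm_num)
  have hψ₂ : ContDiffAt 𝕜 2 ψ x := hψ.of_le (by norm_num)
  have hU₁' : ContDiffAt 𝕜 3 (deriv U) x := hU.derivWithin (by norm_num)
  have hp : ContDiffAt 𝕜 2 (logDeriv (deriv U)) x :=
    (hU₁'.derivWithin (by norm_num)).div (hU₁'.of_le (by norm_num)) hU'
  have ha : ContDiffAt 𝕜 2 (fun y ↦ c * (deriv U y)⁻¹) x :=
    contDiffAt_const.mul ((hU₁'.of_le (by norm_num)).inv hU')
  have inner_near : opCommutator (metricHamiltonian c U) (mulOp U) ψ =ᶠ[𝓝 x]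
      firstOrderOp (fun y ↦ c * logDeriv (deriv U) y) (fun _ ↦ 2 * c) ψ := by
    filter_upwards [hU₂.eventually (by simp), hψ₂.eventually (by simp),
      hU₁'.continuousAt.eventually_ne hU'] with y hUy hψy hUy'
    exact opCommutator_metricHamiltonian_mulOp c hUy hUy' hψy
  have inner_at : opCommutator (metricHamiltonian c U) (mulOp U) (metricHamiltonian c U ψ) x =
      firstOrderOp (fun y ↦ c * logDeriv (deriv U) y) (fun _ ↦ 2 * c)
        (metricHamiltonian c U ψ) x :=
    opCommutator_metricHamiltonian_mulOp c hU₂ hU'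
      (contDiffAt_secondOrderOp ha (hψ.of_le (by norm_num)))
  have ha' := hasDerivAt_const_mul_inv_logDeriv c (hU₁'.differentiableAt (by norm_num)) hU'
  have replace_inner :
      opCommutator (metricHamiltonian c U) (opCommutator (metricHamiltonian c U) (mulOp U)) ψ x =
        opCommutator (metricHamiltonian c U)
          (firstOrderOp (fun y ↦ c * logDeriv (deriv U) y) fun _ ↦ 2 * c) ψ x :=
    congrArg₂ (· - ·) (secondOrderOp_congr inner_near) inner_at
  rw [replace_inner, metricHamiltonian,
    opCommutator_secondOrderOp_firstOrderOp ha'.differentiableAt (contDiffAt_const.mul hp)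
      contDiffAt_const (hψ.of_le (by norm_num)), ha'.deriv]
  simp only [deriv_const', deriv_const_mul_field']
  module

end DifferentialOperators

/-- Explicit double commutator under the metric `g = U'`: with
`Ĥψ = −(σ²/2)(U')⁻¹ψ''` and `p = U''/U'`, for every smooth `ψ : ℝ → ℂ`,
`[Ĥ,[Ĥ,M_U]]ψ = (σ⁴/2)(U')⁻¹ (pψ'' + p'ψ' + (1/2)p''ψ)`; in particular the coefficient
of `ψ'` is `(σ⁴/2)(U')⁻¹((U')⁻¹U'')'` and the zero-order coefficient is
`(σ⁴/4)(U')⁻¹((U')⁻¹U'')''`. -/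
theorem double_commutator_explicit_metric
    (σ : ℝ) (hσ : 0 < σ)
    (U : ℝ → ℝ) (hU : ContDiff ℝ (⊤ : ℕ∞) U) (hU' : ∀ x : ℝ, 0 < deriv U x)
    (p : ℝ → ℝ) (hp : ∀ x : ℝ, p x = deriv (deriv U) x / deriv U x)
    (Hop : (ℝ → ℂ) → ℝ → ℂ)
    (hHop : ∀ (f : ℝ → ℂ) (x : ℝ),
      Hop f x = -(σ ^ 2 / 2 : ℂ) * (Complex.ofReal (deriv U x))⁻¹ * deriv (deriv f) x)
    (ψ : ℝ → ℂ) (hψ : ContDiff ℝ (⊤ : ℕ∞) ψ) (x : ℝ) :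
    Hop (fun y => Hop (fun z => (U z : ℂ) * ψ z) y - (U y : ℂ) * Hop ψ y) x
        - (Hop (fun y => (U y : ℂ) * Hop ψ y) x - (U x : ℂ) * Hop (Hop ψ) x)
      = (σ ^ 4 / 2 : ℂ) * (Complex.ofReal (deriv U x))⁻¹ *
          ((p x : ℂ) * deriv (deriv ψ) x
            + Complex.ofReal (deriv p x) * deriv ψ x
            + (1 / 2 : ℂ) * Complex.ofReal (deriv (deriv p) x) * ψ x) := by
  have hHop' : Hop = metricHamiltonian (-(σ ^ 2 / 2)) U := by
    funext f y
    simp [hHop, metricHamiltonian, secondOrderOp]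
  obtain rfl : p = logDeriv (deriv U) := funext hp
  have general := double_commutator_explicit_metric_general (-(σ ^ 2 / 2))
    (contDiff_infty.1 hU 4).contDiffAt (hU' x).ne' (contDiff_infty.1 hψ 4).contDiffAt
  rw [← hHop'] at general
  -- The left-hand sides agree definitionally, since `r • z` unfolds to `(r : ℂ) * z`.
  refine general.trans ?_
  simp only [Complex.real_smul]
  push_cast
  ring
end
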